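/- Under the assumptions that S contains samples of both classes (S^t and S^nt nonempty), that FS is not constant on S, and that γ is an integer with 1 ≤ γ ≤ |S|, there exists δ₁ > 0 such that the threshold c prescribed by the LHT splitting rule — namely c = minNFS if N₁ = N_max and N_max ≥ γ; c = maxNFS + δ₁ if N₂ = N_max and N_max ≥ γ; c = minTFS if N₃ = N_max and N_max ≥ γ; c = maxTFS + δ₁ if N₄ = N_max and N_max ≥ γ; and c = e if N_max < γ — always partitions S into two strictly nonempty subblocks B₁ = {j ∈ S | FS(j) < c} and B₂ = {j ∈ S | FS(j) ≥ c}. -/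

import Mathlib

open Finset

/-- **Splitting Guarantee (Theorem 1 of LHT).** Under the assumptions that the block
contains samples of both classes, that the feature-weighted sums are not all identical,
and that `1 ≤ γ ≤ |S|`, there exists `δ₁ > 0` such that the threshold `c` prescribed by
the LHT splitting rule always partitions `S` into two strictly nonempty subblocks
`B₁ = {j ∈ S | FS j < c}` and `B₂ = {j ∈ S | FS j ≥ c}`. -/
theorem lht_splitting_guarantee
    {ι : Type*} [DecidableEq ι]
    (St Snt : Finset ι) (FS : ι → ℝ)
    (hSt : St.Nonempty) (hSnt : Snt.Nonempty)
    (hdisj : Disjoint St Snt)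
    (S : Finset ι) (hS : S = St ∪ Snt)
    (hnonconst : ∃ j ∈ S, ∃ k ∈ S, FS j ≠ FS k)
    (γ : ℕ) (hγ1 : 1 ≤ γ) (hγn : γ ≤ S.card)
    (minTFS maxTFS minNFS maxNFS e : ℝ)
    (hminT : minTFS = St.inf' hSt FS)
    (hmaxT : maxTFS = St.sup' hSt FS)
    (hminN : minNFS = Snt.inf' hSnt FS)
    (hmaxN : maxNFS = Snt.sup' hSnt FS)
    (he : e = (minNFS + maxNFS + minTFS + maxTFS) / 4)
    (N₁ N₂ N₃ N₄ Nmax : ℕ)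
    (hN₁ : N₁ = (St.filter (fun j => FS j < minNFS)).card)
    (hN₂ : N₂ = (St.filter (fun j => maxNFS < FS j)).card)
    (hN₃ : N₃ = (Snt.filter (fun j => FS j < minTFS)).card)
    (hN₄ : N₄ = (Snt.filter (fun j => maxTFS < FS j)).card)
    (hNmax : Nmax = max (max N₁ N₂) (max N₃ N₄)) :
    ∃ δ₁ > (0 : ℝ), ∀ c : ℝ,
      ((N₁ = Nmax ∧ γ ≤ Nmax ∧ c = minNFS) ∨
       (N₂ = Nmax ∧ γ ≤ Nmax ∧ c = maxNFS + δ₁) ∨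
       (N₃ = Nmax ∧ γ ≤ Nmax ∧ c = minTFS) ∨
       (N₄ = Nmax ∧ γ ≤ Nmax ∧ c = maxTFS + δ₁) ∨
       (Nmax < γ ∧ c = e)) →
      (S.filter (fun j => FS j < c)).Nonempty ∧
      (S.filter (fun j => c ≤ FS j)).Nonempty := by
  obtain ⟨a, haS, ha⟩ := St.exists_mem_eq_inf' hSt FS
  obtain ⟨b, hbS, hb⟩ := St.exists_mem_eq_sup' hSt FS
  obtain ⟨p, hpS, hp⟩ := Snt.exists_mem_eq_inf' hSnt FS
  obtain ⟨q, hqS, hq⟩ := Snt.exists_mem_eq_sup' hSnt FS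
  have hTl : ∀ j ∈ St, minTFS ≤ FS j := fun j hj => hminT ▸ Finset.inf'_le FS hj
  have hTu : ∀ j ∈ St, FS j ≤ maxTFS := fun j hj => hmaxT ▸ Finset.le_sup' FS hj
  have hNl : ∀ j ∈ Snt, minNFS ≤ FS j := fun j hj => hminN ▸ Finset.inf'_le FS hj
  have hNu : ∀ j ∈ Snt, FS j ≤ maxNFS := fun j hj => hmaxN ▸ Finset.le_sup' FS hj
  rw [← hminT] at ha
  rw [← hmaxT] at hb
  rw [← hminN] at hp
  rw [← hmaxN] at hq
  have mT : ∀ j ∈ St, j ∈ S := fun j hj => hS ▸ Finset.mem_union_left _ hj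
  have mN : ∀ j ∈ Snt, j ∈ S := fun j hj => hS ▸ Finset.mem_union_right _ hj
  have key : ∀ c : ℝ, ∀ x ∈ S, ∀ y ∈ S, FS x < c → c ≤ FS y →
      (S.filter (fun j => FS j < c)).Nonempty ∧
      (S.filter (fun j => c ≤ FS j)).Nonempty := fun c x hx y hy h1 h2 =>
    ⟨⟨x, Finset.mem_filter.2 ⟨hx, h1⟩⟩, ⟨y, Finset.mem_filter.2 ⟨hy, h2⟩⟩⟩
  have ex : ∀ (T : Finset ι) (P : ι → Prop) [DecidablePred P], γ ≤ (T.filter P).card →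
      ∃ j ∈ T, P j := by
    intro T P _ h
    obtain ⟨j, hj⟩ := Finset.card_pos.1 (lt_of_lt_of_le hγ1 h)
    exact ⟨j, (Finset.mem_filter.1 hj).1, (Finset.mem_filter.1 hj).2⟩
  obtain ⟨δ, hδ, hδ'⟩ : ∃ δ > (0 : ℝ), maxTFS ≠ maxNFS → δ = |maxTFS - maxNFS| := by
    by_cases h : maxTFS = maxNFS
    · exact ⟨1, one_pos, fun h' => absurd h h'⟩
    · exact ⟨_, abs_pos.2 (sub_ne_zero.2 h), fun _ => rfl⟩
  refine ⟨δ, hδ, fun c hc => ?_⟩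
  rcases hc with ⟨h, hg, rfl⟩ | ⟨h, hg, rfl⟩ | ⟨h, hg, rfl⟩ | ⟨h, hg, rfl⟩ | ⟨-, rfl⟩
  · rw [← h, hN₁] at hg
    obtain ⟨j, hj, hlt⟩ := ex _ _ hg
    exact key _ j (mT j hj) p (mN p hpS) hlt hp.le
  · rw [← h, hN₂] at hg
    obtain ⟨j, hj, hlt⟩ := ex _ _ hg
    have hlt2 : maxNFS < maxTFS := hlt.trans_le (hTu j hj)
    have h3 := hδ' hlt2.ne'
    rw [abs_of_pos (sub_pos.2 hlt2)] at h3
    exact key _ q (mN q hqS) b (mT b hbS) (by linarith) (by linarith)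
  · rw [← h, hN₃] at hg
    obtain ⟨j, hj, hlt⟩ := ex _ _ hg
    exact key _ j (mN j hj) a (mT a haS) hlt ha.le
  · rw [← h, hN₄] at hg
    obtain ⟨j, hj, hlt⟩ := ex _ _ hg
    have hlt2 : maxTFS < maxNFS := hlt.trans_le (hNu j hj)
    have h3 := hδ' hlt2.ne
    rw [abs_of_neg (sub_neg.2 hlt2)] at h3
    exact key _ b (mT b hbS) q (mN q hqS) (by linarith) (by linarith)
  · have h1 := hTu a haS
    have h2 := hNu p hpS
    constructor
    · by_contra hne
      rw [Finset.not_nonempty_iff_eq_empty, Finset.filter_eq_empty_iff] at hne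
      have ea := not_lt.1 (hne (mT a haS))
      have eb := not_lt.1 (hne (mT b hbS))
      have ep := not_lt.1 (hne (mN p hpS))
      have eq := not_lt.1 (hne (mN q hqS))
      have all : ∀ j ∈ S, FS j = c := by
        intro j hj
        have := not_lt.1 (hne hj)
        rw [hS, Finset.mem_union] at hj
        rcases hj with hj | hj
        · have := hTu j hj
          linarith
        · have := hNu j hj
          linarith
      obtain ⟨j, hj, k, hk, hjk⟩ := hnonconst
      exact hjk ((all j hj).trans (all k hk).symm)
    · by_contra hne
      rw [Finset.not_nonempty_iff_eq_empty, Finset.filter_eq_empty_iff] at hne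
      have ea := not_le.1 (hne (mT a haS))
      have eb := not_le.1 (hne (mT b hbS))
      have ep := not_le.1 (hne (mN p hpS))
      have eq := not_le.1 (hne (mN q hqS))
      linarith
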